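/- Suppose, in addition to the standing combinatorial setup, that w_0(m) ≥ −1 and w_0(2m) ≥ −1. Then w_0(ℓ) ≥ −1 for every ℓ ∈ ℕ^r. Conversely, if w_0(ℓ) ≥ −1 for every ℓ ∈ ℕ^r then in particular w_0(m) ≥ −1 and w_0(2m) ≥ −1. (This is the semigroup-theoretic core of the paper's characterization of reduced curve germs of finite Cohen–Macaulay type: the minimum of the weight function is ≥ −1 if and only if the weights of the multiplicity vector m and of 2m are ≥ −1.) -/

import Mathlib

/-- Induction on vectors of naturals, adding one basis vector at a time. -/
theorem vec_induction {r : ℕ} {P : (Fin r → ℕ) → Prop} (h0 : P 0)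
    (hs : ∀ v i, P v → P (v + Pi.single i 1)) (v : Fin r → ℕ) : P v := by
  obtain ⟨n, hn⟩ : ∃ n, n = ∑ i, v i := ⟨_, rfl⟩
  induction n generalizing v with
  | zero =>
    have : v = 0 := by
      funext i
      have := (Finset.sum_eq_zero_iff (s := Finset.univ) (f := v)).1 hn.symm i (Finset.mem_univ i)
      simpa using this
    rw [this]; exact h0
  | succ n ih =>
    obtain ⟨i, hi⟩ : ∃ i, v i ≠ 0 := by
      by_contra hc
      push Not at hc
      simp [hc] at hn
    have hv : v = (v - Pi.single i 1) + Pi.single i 1 := by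
      funext j
      by_cases hj : j = i
      · subst hj; simp; omega
      · simp [hj]
    have hsum : ∑ j, v j = ∑ j, (v - Pi.single i 1 : Fin r → ℕ) j + 1 := by
      conv_lhs => rw [hv]
      simp only [Pi.add_apply, Finset.sum_add_distrib, Finset.sum_pi_single', Finset.mem_univ,
        if_true, Finset.sum_pi_single]
    rw [hv]
    apply hs
    apply ih
    omega

/-- Division with remainder by a vector. -/
theorem vec_div {r : ℕ} (m : Fin r → ℕ) (i0 : Fin r) (hm : ∀ i, 1 ≤ m i) (n : ℕ) :
    ∀ ℓ : Fin r → ℕ, ℓ i0 ≤ n → ∃ k : ℕ, ∃ v : Fin r → ℕ, ℓ = k • m + v ∧ ∃ j, v j < m j := by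
  induction n with
  | zero =>
    intro ℓ hl
    exact ⟨0, ℓ, by simp, i0, by have := hm i0; omega⟩
  | succ n ih =>
    intro ℓ hl
    by_cases hc : ∃ j, ℓ j < m j
    · exact ⟨0, ℓ, by simp, hc⟩
    · push Not at hc
      obtain ⟨k, v, hv, hj⟩ := ih (ℓ - m) (by
        have := hm i0; simp only [Pi.sub_apply]; omega)
      refine ⟨k + 1, v, ?_, hj⟩
      funext j
      have h1 := congrFun hv j
      have h2 := hc j
      simp only [Pi.sub_apply, Pi.add_apply, Pi.smul_apply, smul_eq_mul, add_mul, one_mul] at h1 ⊢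
      omega

/-- In the standing combinatorial setup (value semigroup `S ⊆ ℕ^r`,
Hilbert function `h`, weight function `w₀(ℓ) = 2h(ℓ) - |ℓ|`, multiplicity vector `m`),
one has `w₀(m) ≥ -1 ∧ w₀(2m) ≥ -1` iff `w₀(ℓ) ≥ -1` for every `ℓ ∈ ℕ^r`. -/
theorem weight_ge_neg_one_iff
    (r : ℕ) (hr : 1 ≤ r)
    (S : AddSubmonoid (Fin r → ℕ))
    (h : (Fin r → ℕ) → ℕ)
    (h0 : h 0 = 0)
    (hstep_pos : ∀ (ℓ : Fin r → ℕ) (i : Fin r),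
      (∃ s ∈ S, s i = ℓ i ∧ ∀ j, j ≠ i → ℓ j ≤ s j) →
        h (ℓ + Pi.single i 1) = h ℓ + 1)
    (hstep_neg : ∀ (ℓ : Fin r → ℕ) (i : Fin r),
      ¬ (∃ s ∈ S, s i = ℓ i ∧ ∀ j, j ≠ i → ℓ j ≤ s j) →
        h (ℓ + Pi.single i 1) = h ℓ)
    (w0 : (Fin r → ℕ) → ℤ)
    (hw0 : ∀ ℓ, w0 ℓ = 2 * (h ℓ : ℤ) - ∑ i, (ℓ i : ℤ))
    (m : Fin r → ℕ) (hm : ∀ i, 1 ≤ m i) (hmS : m ∈ S)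
    (hSm : ∀ s ∈ S, s ≠ 0 → m ≤ s) :
    ((-1 : ℤ) ≤ w0 m ∧ (-1 : ℤ) ≤ w0 (m + m)) ↔ (∀ ℓ, (-1 : ℤ) ≤ w0 ℓ) := by
  constructor
  swap
  · intro H; exact ⟨H _, H _⟩
  rintro ⟨hw1, hw2⟩ ℓ
  have step_le : ∀ a i, h a ≤ h (a + Pi.single i 1) := by
    intro a i
    by_cases hc : ∃ s ∈ S, s i = a i ∧ ∀ j, j ≠ i → a j ≤ s j
    · rw [hstep_pos a i hc]; omega
    · rw [hstep_neg a i hc]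
  have mono : ∀ a v, h a ≤ h (a + v) := by
    intro a v
    induction v using vec_induction with
    | h0 => simp
    | hs v i ih => rw [← add_assoc]; exact ih.trans (step_le _ _)
  have mono' : ∀ a b, a ≤ b → h a ≤ h b := by
    intro a b hab
    obtain ⟨c, rfl⟩ := exists_add_of_le hab
    exact mono a c
  have shift : ∀ a v, h (a + v) + h (a + m) ≤ h (a + m + v) + h a := by
    intro a v
    induction v using vec_induction with
    | h0 => simp; omega
    | hs v i ih =>
      rw [← add_assoc, ← add_assoc]
      by_cases hc : ∃ s ∈ S, s i = (a + v) i ∧ ∀ j, j ≠ i → (a + v) j ≤ s j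
      · have hc' : ∃ s ∈ S, s i = (a + m + v) i ∧ ∀ j, j ≠ i → (a + m + v) j ≤ s j := by
          obtain ⟨s, hs, h1, h2⟩ := hc
          refine ⟨s + m, S.add_mem hs hmS, ?_, ?_⟩
          · simp only [Pi.add_apply] at h1 ⊢; omega
          · intro j hj
            have := h2 j hj
            simp only [Pi.add_apply] at this ⊢; omega
        rw [hstep_pos _ _ hc, hstep_pos _ _ hc']; omega
      · rw [hstep_neg _ _ hc]
        have := step_le (a + m + v) i
        omega
  have line : ∀ (k : ℕ) (i : Fin r) (t : ℕ),
      h (k • m) + t + 1 ≤ h (k • m + Pi.single i (t * m i + 1)) := by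
    intro k i t
    have key : h (k • m + Pi.single i (t * m i + 1)) = h (k • m + Pi.single i (t * m i)) + 1 := by
      rw [Pi.single_add, ← add_assoc]
      apply hstep_pos
      refine ⟨(k + t) • m, S.nsmul_mem hmS _, ?_, ?_⟩
      · simp [add_mul]
      · intro j hj
        simp [hj, add_mul]
    induction t with
    | zero => rw [key]; simp
    | succ t ih =>
      have ih' := ih (by
        rw [Pi.single_add, ← add_assoc]
        apply hstep_pos
        refine ⟨(k + t) • m, S.nsmul_mem hmS _, ?_, ?_⟩
        · simp [add_mul]
        · intro j hj
          simp [hj, add_mul])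
      have h2 : h (k • m + Pi.single i (t * m i + 1)) ≤ h (k • m + Pi.single i ((t + 1) * m i)) := by
        apply mono'
        gcongr
        have := hm i
        rw [add_mul]; omega
      omega
  let i0 : Fin r := ⟨0, hr⟩
  have inc : ∀ k : ℕ, h (k • m) + 1 ≤ h ((k + 1) • m) := by
    intro k
    have h1 := line k i0 0
    have h2 : h (k • m + Pi.single i0 (0 * m i0 + 1)) ≤ h ((k + 1) • m) := by
      apply mono'
      rw [add_smul, one_smul]
      gcongr
      intro j
      by_cases hj : j = i0
      · subst hj; simpa using hm _
      · simp [hj]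
    omega
  have hle1 : ∀ v, v ≤ m → h v ≤ 1 := by
    intro v
    induction v using vec_induction with
    | h0 => intro _; omega
    | hs v i ih =>
      intro hv
      by_cases hv0 : v = 0
      · subst hv0
        rw [hstep_pos 0 i ⟨0, S.zero_mem, by simp, by simp⟩]; omega
      · rw [hstep_neg]
        · exact ih (le_trans (le_add_of_nonneg_right (fun _ => Nat.zero_le _)) hv)
        · rintro ⟨s, hs, h1, h2⟩
          have hvi := hv i
          simp only [Pi.add_apply, Pi.single_eq_same] at hvi
          by_cases hs0 : s = 0
          · subst hs0
            apply hv0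
            funext j
            by_cases hj : j = i
            · subst hj; simpa using h1.symm
            · simpa using h2 j hj
          · have h3 : m i ≤ s i := hSm s hs hs0 i
            omega
  have hhm : h m = 1 := by
    have h1 := hle1 m le_rfl
    have h2 := inc 0
    simp only [zero_add, one_smul, zero_smul, h0] at h2
    omega
  obtain ⟨M, hM⟩ : ∃ M, M = ∑ i, m i := ⟨_, rfl⟩
  rw [hw0, hhm] at hw1
  rw [hw0] at hw2
  have hMc : ∑ i, (m i : ℤ) = M := by rw [hM]; push_cast; rfl
  have hMc2 : ∑ i, (((m + m) i : ℕ) : ℤ) = M + M := by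
    simp only [Pi.add_apply, Nat.cast_add, Finset.sum_add_distrib, hMc]
  rw [hMc] at hw1
  rw [hMc2] at hw2
  have hM3 : M ≤ 3 := by push_cast at hw1; omega
  have h2m : M ≤ h (m + m) := by omega
  have conv : ∀ k : ℕ, M ≤ h ((k + 2) • m) - h ((k + 1) • m) + 1 := by
    intro k
    induction k with
    | zero => simp only [zero_add, one_smul, two_smul, hhm]; omega
    | succ k ih =>
      have h1 := shift ((k + 1) • m) m
      have e1 : (k + 1) • m + m = (k + 2) • m := by rw [← succ_nsmul]
      have e2 : (k + 2) • m + m = (k + 3) • m := by rw [← succ_nsmul]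
      rw [e1, e2] at h1
      have e3 : k + 1 + 2 = k + 3 := by ring
      have e4 : k + 1 + 1 = k + 2 := by ring
      rw [e3, e4]
      omega
  have hk : ∀ k : ℕ, k * M ≤ 2 * h ((k + 2) • m) - 2 * M ∧ M ≤ h ((k + 2) • m) := by
    intro k
    induction k with
    | zero => simp only [zero_add, two_smul]; omega
    | succ k ih =>
      have h1 := conv (k + 1)
      have h2 := inc (k + 2)
      have e3 : k + 1 + 2 = k + 3 := by ring
      have e4 : k + 1 + 1 = k + 2 := by ring
      have e5 : k + 2 + 1 = k + 3 := by ring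
      rw [e3, e4] at h1
      rw [e5] at h2
      rw [e3, add_mul]
      omega
  have hkm : ∀ k : ℕ, k * M ≤ 2 * h (k • m) + 1 := by
    intro k
    match k with
    | 0 => simp
    | 1 => simp only [one_mul, one_smul, hhm]; omega
    | k + 2 =>
      have := hk k
      rw [add_mul]
      omega
  -- decomposition
  obtain ⟨k, v, rfl, j0, hj0⟩ := vec_div m i0 hm _ ℓ le_rfl
  have hres : ∑ i, v i + 2 * h (k • m) ≤ 2 * h (k • m + v) := by
    by_cases hv0 : v = 0
    · subst hv0; simp
    obtain ⟨q, hq⟩ : ∃ q, v q ≠ 0 := by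
      by_contra hc
      push Not at hc
      exact hv0 (funext hc)
    obtain ⟨i, -, hi⟩ := Finset.exists_max_image Finset.univ (fun j => (v j + m j - 1) / m j)
      ⟨q, Finset.mem_univ q⟩
    obtain ⟨K, hK⟩ : ∃ K, K = (v i + m i - 1) / m i := ⟨_, rfl⟩
    simp only [← hK] at hi
    have hK1 : 1 ≤ K := by
      refine le_trans ?_ (hi q (Finset.mem_univ q))
      have := hm q
      rw [Nat.one_le_div_iff this]; omega
    obtain ⟨t, rfl⟩ : ∃ t, K = t + 1 := ⟨K - 1, by omega⟩
    have hvi : t * m i + 1 ≤ v i := by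
      have := (Nat.le_div_iff_mul_le (hm i)).1 hK.le
      rw [add_mul] at this
      have := hm i
      omega
    have hvK : ∀ j, v j ≤ (t + 1) * m j := by
      intro j
      have h1 := hi j (Finset.mem_univ j)
      have h2 := Nat.lt_succ_of_le h1
      rw [Nat.div_lt_iff_lt_mul (hm j)] at h2
      have := hm j
      rw [Nat.succ_mul] at h2
      omega
    have hsum : ∑ j, (v j + if j = j0 then (t + 1) else 0) ≤ ∑ j, (t + 1) * m j := by
      apply Finset.sum_le_sum
      intro j _
      by_cases hj : j = j0
      · subst hj
        simp only [if_true]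
        nlinarith [hm j, mul_le_mul_right (hm j) t]
      · simpa [hj] using hvK j
    rw [Finset.sum_add_distrib, ← Finset.mul_sum, ← hM] at hsum
    simp only [Finset.sum_ite_eq', Finset.mem_univ, if_true] at hsum
    have hb : (t + 1) * M ≤ (t + 1) * 3 := Nat.mul_le_mul_left _ hM3
    have h1 := line k i t
    have h2 : h (k • m + Pi.single i (t * m i + 1)) ≤ h (k • m + v) := by
      apply mono'
      gcongr
      intro j
      by_cases hj : j = i
      · subst hj; simpa using hvi
      · simp [hj]
    omega
  rw [hw0]
  have hs : ∑ i, (((k • m + v) i : ℕ) : ℤ) = ((k * M + ∑ i, v i : ℕ) : ℤ) := by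
    rw [hM, Finset.mul_sum, ← Finset.sum_add_distrib]
    push_cast
    simp
  rw [hs]
  have := hkm k
  omega
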